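/- arXiv:2202.12846 — 2 statements merged into one kernel-verified Lean document; each statement's English description precedes it below -/
import Mathlib

section
/- Let σ : ℝ → ℝ be an activation such that INAL(M_{k'}, σ) = Ω(n^{-k₀}) for every k' = 0, 1, …, k, where M_{k'}(x) = ∏_{i=1}^{k'} x_i. Then for any sequence of functions f_n : {±1}^n → ℝ, the low-degree Fourier weight satisfies W^{≤k}(f_n) ≤ INAL(f_n, σ) · O(n^{k₀}). -/
open MeasureTheory ProbabilityTheory Filter Finset Asymptotics
open scoped NNReal ENNReal

noncomputable section

/-- The ±1 value encoded by a Boolean bit. -/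
def bsign (b : Bool) : ℝ := if b then 1 else -1

/-- Expectation over a uniformly random point of the Boolean cube `{±1}^n`. -/
def bExp (n : ℕ) (g : (Fin n → Bool) → ℝ) : ℝ :=
  (∑ x : Fin n → Bool, g x) / 2 ^ n

/-- A function on the Boolean cube is Boolean(-valued) if it takes values in `{±1}`. -/
def IsBooleanFn {n : ℕ} (f : (Fin n → Bool) → ℝ) : Prop := ∀ x, f x = 1 ∨ f x = -1

/-- Initialization distribution: the weights `w : ℝⁿ` and the bias `b` are
iid `N(0, 1/n)` Gaussians. -/
def initMeasure (n : ℕ) : Measure ((Fin n → ℝ) × ℝ) :=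
  (Measure.pi fun _ : Fin n => gaussianReal 0 (n : ℝ≥0)⁻¹).prod (gaussianReal 0 (n : ℝ≥0)⁻¹)

/-- Initial alignment `INAL(f, σ) = E_{w,b} [ (E_x [f(x) σ(wᵀx + b)])² ]`. -/
def INAL (n : ℕ) (f : (Fin n → Bool) → ℝ) (σ : ℝ → ℝ) : ℝ :=
  ∫ θ : (Fin n → ℝ) × ℝ,
    (bExp n fun x => f x * σ (∑ i, θ.1 i * bsign (x i) + θ.2)) ^ 2 ∂ initMeasure n

/-- The `v`-Gaussian smoothing `Σ_v(t) = E_{Y ∼ N(0,v)} [σ(Y + t)]`. -/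
def gsmooth (σ : ℝ → ℝ) (v : ℝ) (t : ℝ) : ℝ :=
  ∫ y, σ (y + t) ∂ gaussianReal 0 v.toNNReal

/-- `σ` is polynomially bounded: `|σ(x)| ≤ C |x|^c + C` for some `C, c > 0`. -/
def PolyBounded (σ : ℝ → ℝ) : Prop :=
  ∃ C : ℝ, 0 < C ∧ ∃ c : ℕ, 0 < c ∧ ∀ x : ℝ, |σ x| ≤ C * |x| ^ c + C

/-- `σ` is expressive: measurable, polynomially bounded, and its Gaussian smoothing has no
two consecutive vanishing derivatives at `0`. -/
def Expressive (σ : ℝ → ℝ) : Prop :=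
  Measurable σ ∧ PolyBounded σ ∧
    ∀ m : ℕ, iteratedDeriv m (gsmooth σ 1) 0 ≠ 0 ∨ iteratedDeriv (m + 1) (gsmooth σ 1) 0 ≠ 0

/-- A nonnegative sequence is negligible if it decays faster than any inverse polynomial. -/
def Negligible (g : ℕ → ℝ) : Prop :=
  ∀ c : ℕ, Tendsto (fun n : ℕ => (n : ℝ) ^ c * g n) atTop (nhds 0)

/-- Fourier character `M_S(x) = ∏_{i ∈ S} x_i`. -/
def chi {n : ℕ} (S : Finset (Fin n)) (x : Fin n → Bool) : ℝ := ∏ i ∈ S, bsign (x i)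

/-- Fourier coefficient `f̂(S) = E_x [f(x) M_S(x)]`. -/
def fourierCoef (n : ℕ) (f : (Fin n → Bool) → ℝ) (S : Finset (Fin n)) : ℝ :=
  bExp n fun x => f x * chi S x

/-- Fourier weight up to degree `k`: `W^{≤k}(f)`. -/
def weightLE (n k : ℕ) (f : (Fin n → Bool) → ℝ) : ℝ :=
  ∑ S ∈ Finset.univ.filter (fun S : Finset (Fin n) => S.card ≤ k), fourierCoef n f S ^ 2

/-- Fourier weight strictly below degree `k`: `W^{<k}(f)`. -/
def weightLT (n k : ℕ) (f : (Fin n → Bool) → ℝ) : ℝ :=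
  ∑ S ∈ Finset.univ.filter (fun S : Finset (Fin n) => S.card < k), fourierCoef n f S ^ 2

/-- The monomial `M_k(x) = ∏_{i=1}^k x_i`, viewed as a function on `{±1}^n`. -/
def monomial (n k : ℕ) : (Fin n → Bool) → ℝ :=
  fun x => ∏ i ∈ Finset.univ.filter (fun i : Fin n => (i : ℕ) < k), bsign (x i)

/-- The `N`-extension of `f : {±1}^n → ℝ` (for `n ≤ N`): ignore the last `N - n` coordinates. -/
def extendFn (n N : ℕ) (f : (Fin n → Bool) → ℝ) : (Fin N → Bool) → ℝ :=
  fun x => f fun i => if h : (i : ℕ) < N then x ⟨i, h⟩ else false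

/-- Cross-predictability of (the uniform distribution on) the orbit of `f` under coordinate
permutations, with uniform inputs: `CP(orb(f), U^N)`. -/
def orbitCP (N : ℕ) (f : (Fin N → Bool) → ℝ) : ℝ :=
  (∑ π : Equiv.Perm (Fin N), ∑ π' : Equiv.Perm (Fin N),
      (bExp N fun x => f (fun i => x (π i)) * f (fun i => x (π' i))) ^ 2) /
    (Fintype.card (Equiv.Perm (Fin N))) ^ 2

/-- `N = n^{1+ε}` (rounded up). -/
def Ndim (ε : ℝ) (n : ℕ) : ℕ := ⌈(n : ℝ) ^ (1 + ε)⌉₊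


lemma int_comp_lin {E E' : Type*} [NormedAddCommGroup E] [NormedSpace ℝ E] [FiniteDimensional ℝ E]
    [MeasurableSpace E] [BorelSpace E]
    [NormedAddCommGroup E'] [NormedSpace ℝ E'] [FiniteDimensional ℝ E']
    [MeasurableSpace E'] [BorelSpace E']
    (μ : Measure E) [μ.IsAddHaarMeasure] (ν : Measure E') [ν.IsAddHaarMeasure]
    (L : E ≃L[ℝ] E') (Φ : E' → ℝ) (h : Integrable Φ ν) : Integrable (fun z => Φ (L z)) μ := by
  have : (μ.map L).IsAddHaarMeasure := L.isAddHaarMeasure_map μ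
  have e : μ.map L = (Measure.addHaarScalarFactor (μ.map L) ν) • ν :=
    Measure.isAddLeftInvariant_eq_smul _ _
  have h2 : Integrable Φ (μ.map L) := by
    rw [e]; exact h.smul_measure_nnreal
  have := (MeasurableEmbedding.integrable_map_iff (f := fun z => L z)
    L.toHomeomorph.measurableEmbedding (μ := μ) (g := Φ)).1 h2
  exact this

lemma pi_gauss (n : ℕ) (v : ℝ≥0) (hv : v ≠ 0) :
    (Measure.pi fun _ : Fin n => gaussianReal 0 v) =
      (volume : Measure (Fin n → ℝ)).withDensity
        (fun w => ENNReal.ofReal (∏ i, gaussianPDFReal 0 v (w i))) := by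
  refine Measure.pi_eq (fun s hs => ?_)
  rw [withDensity_apply _ (MeasurableSet.univ_pi hs), volume_pi, Measure.restrict_pi_pi,
    ← ofReal_integral_eq_lintegral_ofReal]
  · rw [integral_fintype_prod_eq_prod (μ := fun i => volume.restrict (s i))
      (f := fun i => gaussianPDFReal 0 v), ENNReal.ofReal_prod_of_nonneg]
    · refine Finset.prod_congr rfl fun i _ => ?_
      rw [gaussianReal_apply_eq_integral _ hv]
    · intro i _
      exact integral_nonneg (fun x => gaussianPDFReal_nonneg _ _ _)
  · exact Integrable.fintype_prod (μ := fun i => volume.restrict (s i))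
      (f := fun i => gaussianPDFReal 0 v) (fun i => (integrable_gaussianPDFReal 0 v).restrict)
  · exact ae_of_all _ fun x => Finset.prod_nonneg fun i _ => gaussianPDFReal_nonneg _ _ _

/-- integrability under initMeasure in terms of volume -/
lemma integrable_init_iff (n : ℕ) (hn : 0 < n) (Φ : (Fin n → ℝ) × ℝ → ℝ) :
    Integrable Φ (initMeasure n) ↔
    Integrable (fun θ : (Fin n → ℝ) × ℝ =>
      Φ θ * Real.exp (-((n : ℝ) / 2) * (∑ i, θ.1 i ^ 2 + θ.2 ^ 2)))
      ((volume : Measure (Fin n → ℝ)).prod (volume : Measure ℝ)) := by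
  have hv : ((n : ℝ≥0)⁻¹) ≠ 0 := by positivity
  set v : ℝ≥0 := (n : ℝ≥0)⁻¹ with hvdef
  have hm : Measurable (fun w : Fin n → ℝ => ENNReal.ofReal (∏ i, gaussianPDFReal 0 v (w i))) := by
    refine ENNReal.measurable_ofReal.comp ?_
    refine Finset.measurable_prod _ fun i _ => ?_
    exact (measurable_gaussianPDFReal 0 v).comp (measurable_pi_apply i)
  unfold initMeasure
  rw [← hvdef, pi_gauss n v hv, gaussianReal_of_var_ne_zero 0 hv,
    prod_withDensity hm (measurable_gaussianPDF 0 v)]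
  have hm2 : Measurable (fun z : (Fin n → ℝ) × ℝ =>
      ENNReal.ofReal (∏ i, gaussianPDFReal 0 v (z.1 i)) * gaussianPDF 0 v z.2) :=
    (hm.comp measurable_fst).mul ((measurable_gaussianPDF 0 v).comp measurable_snd)
  rw [integrable_withDensity_iff hm2 (ae_of_all _ fun z =>
    ENNReal.mul_lt_top ENNReal.ofReal_lt_top gaussianPDF_lt_top)]
  set c : ℝ := (Real.sqrt (2 * Real.pi * v))⁻¹ with hc
  have hc0 : c ≠ 0 := by
    have : (0:ℝ) < v := by positivity
    positivity
  have key : ∀ z : (Fin n → ℝ) × ℝ, Φ z * (ENNReal.ofReal (∏ i, gaussianPDFReal 0 v (z.1 i)) *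
      gaussianPDF 0 v z.2).toReal =
      (c ^ (n+1)) * (Φ z * Real.exp (-((n : ℝ) / 2) * (∑ i, z.1 i ^ 2 + z.2 ^ 2))) := by
    intro z
    rw [ENNReal.toReal_mul, toReal_gaussianPDF, ENNReal.toReal_ofReal
      (Finset.prod_nonneg fun i _ => gaussianPDFReal_nonneg _ _ _)]
    have e : ∀ x, gaussianPDFReal 0 v x = c * Real.exp (-((n:ℝ)/2) * x^2) := by
      intro x
      rw [gaussianPDFReal_def, hc]
      simp only [sub_zero]
      congr 2
      have : (n:ℝ) ≠ 0 := by positivity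
      simp only [hvdef, NNReal.coe_inv, NNReal.coe_natCast]
      field_simp
    simp only [e, Finset.prod_mul_distrib, Finset.prod_const, Finset.card_univ, Fintype.card_fin]
    rw [← Real.exp_sum, mul_add, Real.exp_add, Finset.mul_sum]
    ring
  simp_rw [key]
  rw [integrable_const_mul_iff (IsUnit.mk0 _ (pow_ne_zero _ hc0))]

/-- weighted square integrability -/
def KK (c : ℝ) (g : ℝ → ℝ) : Prop := MemLp (fun s => g s * Real.exp (-c * s ^ 2)) 2 volume

lemma KK_of_bound {c C : ℝ} {g φ : ℝ → ℝ} (hφ : Continuous φ) (hpos : ∀ s, 0 < φ s)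
    (h : MemLp (fun s => g s * φ s) 2 volume) (hb : ∀ s, Real.exp (-c * s ^ 2) ≤ C * φ s) :
    KK c g := by
  unfold KK
  refine MemLp.of_le_mul (c := C) h ?_ (ae_of_all _ fun s => ?_)
  · have : (fun s => g s * Real.exp (-c * s ^ 2)) =
        fun s => (g s * φ s) * (Real.exp (-c * s ^ 2) / φ s) := by
      funext s
      have := (hpos s).ne'
      field_simp
    rw [this]
    refine h.1.mul (Continuous.aestronglyMeasurable ?_)
    exact Continuous.div (by fun_prop) hφ (fun s => (hpos s).ne')
  · rw [norm_mul, norm_mul, Real.norm_of_nonneg (Real.exp_pos _).le,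
      Real.norm_of_nonneg (hpos s).le]
    have := mul_le_mul_of_nonneg_left (hb s) (norm_nonneg (g s))
    linarith

lemma KK_mono {c c' : ℝ} (hc : c ≤ c') {g : ℝ → ℝ} (h : KK c g) : KK c' g := by
  refine KK_of_bound (C := 1) (φ := fun s => Real.exp (-c * s ^ 2)) (by fun_prop)
    (fun s => Real.exp_pos _) h (fun s => ?_)
  rw [one_mul]
  apply Real.exp_le_exp.2
  nlinarith [sq_nonneg s]

lemma KK_add {c : ℝ} {f g : ℝ → ℝ} (hf : KK c f) (hg : KK c g) : KK c (fun s => f s + g s) := by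
  unfold KK at *
  have := hf.add hg
  refine this.congr_norm ?_ ?_
  · have e : (fun s => (f s + g s) * Real.exp (-c * s ^ 2)) =
      (fun s => f s * Real.exp (-c * s ^ 2)) + fun s => g s * Real.exp (-c * s ^ 2) := by
      funext s; simp [add_mul]
    rw [e]; exact this.1
  · exact ae_of_all _ fun s => by simp [add_mul]

lemma KK_smul {c : ℝ} (a : ℝ) {f : ℝ → ℝ} (hf : KK c f) : KK c (fun s => a * f s) := by
  unfold KK at *
  have := hf.const_mul a
  simpa [mul_assoc] using this

lemma KK_sum {ι : Type*} {c : ℝ} (t : Finset ι) (f : ι → ℝ → ℝ) (hf : ∀ i ∈ t, KK c (f i)) :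
    KK c (fun s => ∑ i ∈ t, f i s) := by
  unfold KK at *
  have := memLp_finsetSum t hf
  simpa [Finset.sum_mul] using this

lemma KK_const {c : ℝ} (hc : 0 < c) (a : ℝ) : KK c (fun _ => a) := by
  unfold KK
  refine MemLp.const_mul ?_ a
  rw [memLp_two_iff_integrable_sq (by fun_prop)]
  have := integrable_exp_neg_mul_sq (b := 2 * c) (by linarith)
  refine this.congr (ae_of_all _ fun s => ?_)
  simp only
  rw [← Real.exp_nat_mul]
  congr 1; push_cast; ring

lemma KK_meas {c : ℝ} {g : ℝ → ℝ} (h : KK c g) : AEStronglyMeasurable g volume := by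
  have : g = fun s => (g s * Real.exp (-c * s ^ 2)) * Real.exp (c * s ^ 2) := by
    funext s
    rw [mul_assoc, ← Real.exp_add]; simp
  rw [this]
  exact h.1.mul (Continuous.aestronglyMeasurable (by fun_prop))

lemma KK_affine {c c' ρ d : ℝ} (hc : 0 < c) (hcc : c * ρ ^ 2 < c') {g : ℝ → ℝ} (h : KK c g) :
    KK c' (fun s => g (ρ * s + d)) := by
  by_cases hρ : ρ = 0
  · subst hρ
    simp only [zero_mul, zero_add]
    exact KK_const (by simpa using hcc) _
  have h1 : MemLp (fun s => (fun s => g s * Real.exp (-c * s ^ 2)) (s + d)) 2 volume :=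
    MemLp.comp_measurePreserving h (measurePreserving_add_right volume d)
  have h2 : MemLp (fun s => (fun s => (fun s => g s * Real.exp (-c * s ^ 2)) (s + d)) (ρ * s))
      2 volume := by
    refine MemLp.comp_of_map (μ := volume) (f := fun s => ρ * s)
      (g := fun s => (fun s => g s * Real.exp (-c * s ^ 2)) (s + d)) ?_ (measurable_const_mul ρ).aemeasurable
    rw [Real.map_volume_mul_left hρ]
    exact h1.smul_measure ENNReal.ofReal_ne_top
  -- bound
  set δ := c' - c * ρ ^ 2 with hδ
  have hδ0 : 0 < δ := by linarith
  refine KK_of_bound (C := Real.exp (c * d ^ 2 + (c * ρ * d) ^ 2 / δ))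
    (φ := fun s => Real.exp (-c * (ρ * s + d) ^ 2)) (by fun_prop)
    (fun s => Real.exp_pos _) h2 (fun s => ?_)
  rw [← Real.exp_add]
  apply Real.exp_le_exp.2
  have e : c' = δ + c * ρ ^ 2 := by linarith
  have : 0 ≤ (δ * s - c * ρ * d) ^ 2 / δ := by positivity
  have e2 : (δ * s - c * ρ * d) ^ 2 / δ =
     δ * s ^ 2 - 2 * s * (c * ρ * d) + (c * ρ * d) ^ 2 / δ := by
    field_simp
    ring
  rw [e2] at this
  rw [e]
  nlinarith

lemma KK_shift {c d : ℝ} (hc : 0 < c) {g : ℝ → ℝ} (h : KK c g) :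
    KK (2 * c) (fun s => g (s + d)) := by
  have := KK_affine (c' := 2 * c) (ρ := 1) (d := d) hc (by linarith) h
  simpa using this

/-- sign removal -/
lemma sign_removal {c : ℝ} (hc : 0 < c) (A : ℝ → ℝ)
    (h : ∀ᵐ t : ℝ, Integrable (fun s => (A s + A t) ^ 2 * Real.exp (-(2 * c) * s ^ 2))) :
    KK c A := by
  have hsq : ∀ s : ℝ, Real.exp (-c * s ^ 2) ^ 2 = Real.exp (-(2 * c) * s ^ 2) := by
    intro s
    rw [← Real.exp_nat_mul]; congr 1; push_cast; ring
  have hI : Integrable (fun s : ℝ => Real.exp (-(2 * c) * s ^ 2)) :=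
    integrable_exp_neg_mul_sq (b := 2 * c) (by linarith)
  by_cases hd : ∃ t₁ t₂, A t₁ ≠ A t₂ ∧
      Integrable (fun s => (A s + A t₁) ^ 2 * Real.exp (-(2 * c) * s ^ 2)) ∧
      Integrable (fun s => (A s + A t₂) ^ 2 * Real.exp (-(2 * c) * s ^ 2))
  · obtain ⟨t₁, t₂, hne, h1, h2⟩ := hd
    have hA : Integrable (fun s => A s * Real.exp (-(2 * c) * s ^ 2)) := by
      have := ((h1.sub h2).sub (hI.const_mul (A t₁ ^ 2 - A t₂ ^ 2))).const_mul
        (2 * (A t₁ - A t₂))⁻¹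
      refine this.congr (ae_of_all _ fun s => ?_)
      have : A t₁ - A t₂ ≠ 0 := sub_ne_zero.2 hne
      simp only [Pi.sub_apply]
      field_simp
      ring
    have hA2 : Integrable (fun s => A s ^ 2 * Real.exp (-(2 * c) * s ^ 2)) := by
      have := (h1.sub (hA.const_mul (2 * A t₁))).sub (hI.const_mul (A t₁ ^ 2))
      refine this.congr (ae_of_all _ fun s => ?_)
      simp only [Pi.sub_apply]
      ring
    unfold KK
    rw [memLp_two_iff_integrable_sq]
    · refine hA2.congr (ae_of_all _ fun s => ?_)
      simp only [mul_pow, hsq]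
    · have : (fun s => A s * Real.exp (-c * s ^ 2)) =
        fun s => (A s * Real.exp (-(2 * c) * s ^ 2)) * Real.exp (c * s ^ 2) := by
        funext s
        rw [mul_assoc, ← Real.exp_add]; congr 2; ring
      rw [this]
      exact hA.1.mul (Continuous.aestronglyMeasurable (by fun_prop))
  · push Not at hd
    obtain ⟨t₀, ht₀⟩ := h.exists
    have hae : A =ᵐ[volume] fun _ => A t₀ := by
      filter_upwards [h] with t ht
      by_contra hne
      exact hd t t₀ hne ht ht₀
    have := KK_const hc (A t₀)
    unfold KK at *
    refine (memLp_congr_ae ?_).1 this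
    filter_upwards [hae] with s hs
    rw [hs]

lemma peel (B : ℝ → ℝ)
    (h : ∀ᵐ v : ℝ, ∃ c, 0 < c ∧ KK c (fun s => B (s + v) + B (s - v))) :
    ∃ c, 0 < c ∧ KK c B := by
  obtain ⟨a, c₁, hc₁, ha⟩ := h.exists
  have h' : ∀ᵐ v : ℝ, ∃ c, 0 < c ∧ KK c (fun s => B (s + (v - a)) + B (s - (v - a))) :=
    (measurePreserving_sub_right volume a).quasiMeasurePreserving.ae h
  obtain ⟨b, ⟨c₂, hc₂, hb⟩, c₃, hc₃, hab⟩ := (h.and h').exists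
  have k1 := KK_shift (d := a) hc₁ ha
  have k2 := KK_shift (d := b) hc₂ hb
  have k3 := KK_shift (d := a + b) hc₃ hab
  refine ⟨max (2 * c₁) (max (2 * c₂) (2 * c₃)), lt_max_of_lt_left (by linarith), ?_⟩
  have k1' := KK_mono (le_max_left (2 * c₁) (max (2 * c₂) (2 * c₃))) k1
  have k2' := KK_mono (le_trans (le_max_left _ _) (le_max_right (2 * c₁) (max (2 * c₂) (2 * c₃)))) k2
  have k3' := KK_mono (le_trans (le_max_right _ _) (le_max_right (2 * c₁) (max (2 * c₂) (2 * c₃)))) k3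
  have := KK_smul (1 / 2) (KK_add (KK_add k1' k2') (KK_smul (-1) k3'))
  convert this using 2 with s
  have e1 : s + a + a = s + 2 * a := by ring
  have e2 : s + b + b = s + 2 * b := by ring
  have e3 : s + (a + b) + (b - a) = s + 2 * b := by ring
  have e4 : s + (a + b) - (b - a) = s + 2 * a := by ring
  rw [e1, e2, e3, e4, add_sub_cancel_right, add_sub_cancel_right]
  ring

lemma sum_cube_succ (m : ℕ) (φ : (Fin (m + 1) → Bool) → ℝ) :
    ∑ x, φ x = ∑ x : Fin m → Bool, (φ (Fin.cons true x) + φ (Fin.cons false x)) := by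
  rw [← (Fin.consEquiv (fun _ => Bool)).sum_comp, Fintype.sum_prod_type_right]
  simp [Fin.consEquiv]

lemma peel_all (m : ℕ) (σ : ℝ → ℝ)
    (h : ∀ᵐ u : Fin m → ℝ, ∃ c, 0 < c ∧
      KK c (fun s => ∑ x : Fin m → Bool, σ (s + ∑ i, u i * bsign (x i)))) :
    ∃ c, 0 < c ∧ KK c σ := by
  induction m with
  | zero =>
    obtain ⟨u, c, hc, hu⟩ := h.exists
    exact ⟨c, hc, by simpa using hu⟩
  | succ m ih =>
    apply ih
    have h1 := ((volume_preserving_piFinSuccAbove (fun _ : Fin (m + 1) => ℝ) 0).symm).quasiMeasurePreserving.ae h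
    have h2 : ∀ᵐ z : (Fin m → ℝ) × ℝ ∂(volume.prod volume), ∃ c, 0 < c ∧
      KK c (fun s => ∑ x : Fin (m+1) → Bool, σ (s + ∑ i, (Fin.cons z.2 z.1 : Fin (m+1) → ℝ) i * bsign (x i))) := by
      have h3 := (Measure.measurePreserving_swap (μ := (volume : Measure (Fin m → ℝ)))
        (ν := (volume : Measure ℝ))).quasiMeasurePreserving.ae h1
      simpa [MeasurableEquiv.piFinSuccAbove, Fin.insertNthEquiv] using h3
    have h4 := Measure.ae_ae_of_ae_prod h2
    filter_upwards [h4] with u hu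
    apply peel
    filter_upwards [hu] with v hv
    obtain ⟨c, hc, hk⟩ := hv
    refine ⟨c, hc, ?_⟩
    convert hk using 2 with s
    rw [sum_cube_succ, ← Finset.sum_add_distrib]
    refine Finset.sum_congr rfl fun x _ => ?_
    simp only [Fin.sum_univ_succ, Fin.cons_zero, Fin.cons_succ, bsign]
    congr 2 <;> simp <;> ring

def L1 (m : ℕ) : ((Fin m → ℝ) × (ℝ × ℝ)) ≃ₗ[ℝ] ((Fin (m + 1) → ℝ) × ℝ) where
  toFun z := (Fin.cons ((z.2.2 - z.2.1) / 2) z.1, (z.2.2 + z.2.1) / 2)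
  invFun θ := (Fin.tail θ.1, (θ.2 - θ.1 0, θ.2 + θ.1 0))
  map_add' z z' := by
    ext i
    · refine Fin.cases ?_ (fun j => ?_) i <;> simp
      ring
    · simp; ring
  map_smul' a z := by
    ext i
    · refine Fin.cases ?_ (fun j => ?_) i <;> simp
      ring
    · simp; ring
  left_inv z := by
    ext i <;> simp <;> ring
  right_inv θ := by
    ext i
    · refine Fin.cases ?_ (fun j => ?_) i <;> simp [Fin.tail]
    · simp

lemma stage1 (m : ℕ) (σ : ℝ → ℝ)
    (h : Integrable (fun θ : (Fin (m + 1) → ℝ) × ℝ =>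
      (∑ x : Fin (m + 1) → Bool, σ (∑ i, θ.1 i * bsign (x i) + θ.2)) ^ 2) (initMeasure (m + 1))) :
    ∃ c, 0 < c ∧ KK c σ := by
  rw [integrable_init_iff _ (Nat.succ_pos m)] at h
  have : ((volume : Measure ℝ).prod (volume : Measure ℝ)).IsAddHaarMeasure := inferInstance
  have : ((volume : Measure (Fin m → ℝ)).prod
    ((volume : Measure ℝ).prod (volume : Measure ℝ))).IsAddHaarMeasure :=
    Measure.prod.instIsAddHaarMeasure _ _
  have h1 := int_comp_lin ((volume : Measure (Fin m → ℝ)).prod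
    ((volume : Measure ℝ).prod (volume : Measure ℝ))) (volume.prod volume) (L1 m).toContinuousLinearEquiv _ h
  apply peel_all m σ
  filter_upwards [h1.prod_right_ae] with u hu
  refine ⟨((m + 1 : ℕ) : ℝ) / 8, by positivity, ?_⟩
  apply sign_removal (by positivity)
  filter_upwards [hu.prod_right_ae] with t ht
  have := ht.const_mul (Real.exp ((((m + 1 : ℕ) : ℝ) / 2) * (∑ i, u i ^ 2 + t ^ 2 / 2)))
  refine this.congr (ae_of_all _ fun s => ?_)
  simp only [LinearEquiv.coe_toContinuousLinearEquiv', L1, LinearEquiv.coe_mk, LinearMap.coe_mk,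
    AddHom.coe_mk]
  rw [mul_left_comm, ← Real.exp_add]
  congr 1
  · congr 1
    rw [sum_cube_succ, Finset.sum_add_distrib]
    simp only [Fin.sum_univ_succ, Fin.cons_zero, Fin.cons_succ, bsign]
    congr 1
    · refine Finset.sum_congr rfl fun x _ => ?_
      congr 1; simp; ring
    · refine Finset.sum_congr rfl fun x _ => ?_
      congr 1; simp; ring
  · congr 1
    simp only [Fin.sum_univ_succ, Fin.cons_zero, Fin.cons_succ]
    ring

def L2 (n : ℕ) : ((Fin n → ℝ) × ℝ) ≃ₗ[ℝ] ((Fin n → ℝ) × ℝ) where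
  toFun z := (fun i => z.1 i + z.2 / (n + 1), z.2 / (n + 1) - ∑ i, z.1 i)
  invFun θ := (fun i => θ.1 i - (θ.2 + ∑ i, θ.1 i) / (n + 1), θ.2 + ∑ i, θ.1 i)
  map_add' z z' := by
    ext i
    · simp; ring
    · simp [Finset.sum_add_distrib]; ring
  map_smul' a z := by
    ext i
    · simp; ring
    · simp [← Finset.mul_sum]; ring
  left_inv z := by
    have : (n : ℝ) + 1 ≠ 0 := by positivity
    ext i
    · simp [Finset.sum_add_distrib]; field_simp; ring
    · simp [Finset.sum_add_distrib]; field_simp; ring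
  right_inv θ := by
    have : (n : ℝ) + 1 ≠ 0 := by positivity
    ext i
    · simp
    · simp [Finset.sum_sub_distrib]; field_simp; ring

lemma L2_quad (n : ℕ) (z : (Fin n → ℝ) × ℝ) :
    ∑ i, (L2 n z).1 i ^ 2 + (L2 n z).2 ^ 2 =
      z.2 ^ 2 / (n + 1) + (∑ i, z.1 i ^ 2 + (∑ i, z.1 i) ^ 2) := by
  have : (n : ℝ) + 1 ≠ 0 := by positivity
  simp only [L2, LinearEquiv.coe_mk, LinearMap.coe_mk, AddHom.coe_mk, add_sq,
    Finset.sum_add_distrib, ← Finset.sum_mul, ← Finset.mul_sum, Finset.sum_const,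
    Finset.card_univ, Fintype.card_fin, nsmul_eq_mul]
  field_simp
  ring

lemma L2_arg (n : ℕ) (z : (Fin n → ℝ) × ℝ) (x : Fin n → Bool) :
    ∑ i, (L2 n z).1 i * bsign (x i) + (L2 n z).2 =
      ((∑ i, bsign (x i) + 1) / (n + 1)) * z.2 + (∑ i, z.1 i * bsign (x i) - ∑ i, z.1 i) := by
  simp only [L2, LinearEquiv.coe_mk, LinearMap.coe_mk, AddHom.coe_mk, add_mul,
    Finset.sum_add_distrib, ← Finset.mul_sum]
  ring

lemma boot {ι : Type*} [Fintype ι] [DecidableEq ι] (i₀ : ι) (ρ d : ι → ℝ) (cs θ : ℝ)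
    (hcs : 0 < cs) (hθ : 0 < θ) (hθ1 : θ < 1) (h1 : ρ i₀ = 1) (h0 : d i₀ = 0)
    (hρ : ∀ i, i ≠ i₀ → ρ i ^ 2 < θ) (σ : ℝ → ℝ)
    (hI : Integrable (fun s => (∑ i, σ (ρ i * s + d i)) ^ 2 * Real.exp (-(2 * cs) * s ^ 2)))
    (hK : ∃ c, 0 < c ∧ KK c σ) : KK cs σ := by
  have step : ∀ c, 0 < c → KK c σ → KK (max cs (θ * c)) σ := by
    intro c hc hk
    have hG : KK cs (fun s => ∑ i, σ (ρ i * s + d i)) := by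
      unfold KK
      rw [memLp_two_iff_integrable_sq]
      · refine hI.congr (ae_of_all _ fun s => ?_)
        simp only [mul_pow]
        rw [← Real.exp_nat_mul]
        congr 2; push_cast; ring
      · have hk' : KK (c * (∑ i, ρ i ^ 2) + 1) (fun s => ∑ i, σ (ρ i * s + d i)) := by
          refine KK_sum _ _ fun i _ => KK_affine hc ?_ hk
          have : ρ i ^ 2 ≤ ∑ i, ρ i ^ 2 :=
            Finset.single_le_sum (f := fun i => ρ i ^ 2) (fun i _ => sq_nonneg _)
              (Finset.mem_univ i)
          nlinarith
        exact (KK_meas hk').mul (Continuous.aestronglyMeasurable (by fun_prop))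
    have hR : KK (θ * c) (fun s => ∑ i ∈ Finset.univ.erase i₀, σ (ρ i * s + d i)) := by
      refine KK_sum _ _ fun i hi => KK_affine hc ?_ hk
      have := hρ i (Finset.ne_of_mem_erase hi)
      nlinarith
    have := KK_add (KK_mono (le_max_left cs (θ * c)) hG)
      (KK_smul (-1) (KK_mono (le_max_right cs (θ * c)) hR))
    convert this using 2 with s
    rw [← Finset.add_sum_erase _ _ (Finset.mem_univ i₀), h1, h0, one_mul, add_zero]
    ring
  obtain ⟨c, hc, hk⟩ := hK
  have iter : ∀ m : ℕ, KK (max cs (θ ^ m * c)) σ := by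
    intro m
    induction m with
    | zero => exact KK_mono (by simp) hk
    | succ m ih =>
      refine KK_mono ?_ (step _ (lt_max_of_lt_left hcs) ih)
      refine max_le (le_max_left _ _) ?_
      rw [mul_max_of_nonneg _ _ hθ.le]
      refine max_le (le_trans ?_ (le_max_left _ _)) (le_trans ?_ (le_max_right _ _))
      · nlinarith
      · rw [pow_succ]; apply le_of_eq; ring
  obtain ⟨m, hm⟩ := exists_pow_lt_of_lt_one (div_pos hcs hc) hθ1
  refine KK_mono (max_le le_rfl ?_) (iter m)
  exact ((lt_div_iff₀ hc).1 hm).le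

lemma stage2 (n : ℕ) (hn : 0 < n) (σ : ℝ → ℝ)
    (h : Integrable (fun θ : (Fin n → ℝ) × ℝ =>
      (∑ x : Fin n → Bool, σ (∑ i, θ.1 i * bsign (x i) + θ.2)) ^ 2) (initMeasure n)) :
    KK ((n : ℝ) / (4 * (n + 1))) σ := by
  have hK : ∃ c, 0 < c ∧ KK c σ := by
    obtain ⟨m, rfl⟩ := Nat.exists_eq_succ_of_ne_zero hn.ne'
    exact stage1 m σ h
  rw [integrable_init_iff _ hn] at h
  have h1 := int_comp_lin ((volume : Measure (Fin n → ℝ)).prod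
    (volume : Measure ℝ)) (volume.prod volume) (L2 n).toContinuousLinearEquiv _ h
  obtain ⟨u, hu⟩ := h1.prod_right_ae.exists
  simp only [LinearEquiv.coe_toContinuousLinearEquiv', L2_arg, L2_quad] at hu
  have hn1 : (1 : ℝ) ≤ n := by exact_mod_cast hn
  have hu' := hu.const_mul (Real.exp (((n : ℝ) / 2) * (∑ i, u i ^ 2 + (∑ i, u i) ^ 2)))
  refine boot (fun _ => true) (fun x => (∑ i, bsign (x i) + 1) / ((n : ℝ) + 1))
    (fun x => ∑ i, u i * bsign (x i) - ∑ i, u i) _ ((n : ℝ) / (n + 1)) (by positivity)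
    (by positivity) ?_ ?_ ?_ ?_ σ ?_ hK
  · rw [div_lt_one (by positivity)]; linarith
  · simp only [bsign]
    simp
    have hne : (n : ℝ) + 1 ≠ 0 := by positivity
    exact hne
  · simp [bsign]
  · intro x hx
    have hb : ∀ b, -1 ≤ bsign b ∧ bsign b ≤ 1 := by
      intro b; cases b <;> simp [bsign]
    obtain ⟨j, hj⟩ : ∃ j, x j = false := by
      by_contra hcon
      push Not at hcon
      exact hx (funext fun j => by simpa using hcon j)
    have e : ∑ i, bsign (x i) = -1 + ∑ i ∈ Finset.univ.erase j, bsign (x i) := by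
      rw [← Finset.add_sum_erase _ _ (Finset.mem_univ j), hj]
      simp [bsign]
    have hcard : ((Finset.univ.erase j).card : ℝ) = n - 1 := by
      rw [Finset.card_erase_of_mem (Finset.mem_univ j)]
      simp [Nat.cast_sub (Nat.succ_le_of_lt hn)]
    have u1 : ∑ i ∈ Finset.univ.erase j, bsign (x i) ≤ n - 1 := by
      rw [← hcard]
      simpa using Finset.sum_le_card_nsmul (Finset.univ.erase j) (fun i => bsign (x i)) 1
        (fun i _ => (hb _).2)
    have u2 : -((n : ℝ) - 1) ≤ ∑ i ∈ Finset.univ.erase j, bsign (x i) := by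
      rw [← hcard]
      simpa using Finset.card_nsmul_le_sum (Finset.univ.erase j) (fun i => bsign (x i)) (-1)
        (fun i _ => (hb _).1)
    rw [e]
    set S := ∑ i ∈ Finset.univ.erase j, bsign (x i)
    have e3 : -1 + S + 1 = S := by ring
    rw [e3, div_pow, div_lt_div_iff₀ (by positivity) (by positivity)]
    have : S ^ 2 ≤ ((n : ℝ) - 1) ^ 2 := sq_le_sq' u2 u1
    have h3 : S ^ 2 * ((n : ℝ) + 1) ≤ ((n : ℝ) - 1) ^ 2 * (n + 1) := by gcongr
    nlinarith
  · refine hu'.congr (ae_of_all _ fun s => ?_)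
    simp only
    rw [mul_left_comm, ← Real.exp_add]
    congr 2
    field_simp
    ring

lemma init_ac (n : ℕ) (hn : 0 < n) :
    initMeasure n ≪ (volume : Measure (Fin n → ℝ)).prod (volume : Measure ℝ) := by
  have hv : ((n : ℝ≥0)⁻¹) ≠ 0 := by positivity
  unfold initMeasure
  rw [pi_gauss n _ hv]
  exact (withDensity_absolutelyContinuous _ _).prod (gaussianReal_absolutelyContinuous 0 hv)

def TT (n : ℕ) : ((Fin n → ℝ) × ℝ) →ₗ[ℝ] ℝ where
  toFun θ := ∑ i, θ.1 i + θ.2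
  map_add' a b := by simp [Finset.sum_add_distrib]; ring
  map_smul' a b := by simp [← Finset.mul_sum]; ring

lemma memLp_one (n : ℕ) (hn : 0 < n) (σ : ℝ → ℝ) (h : KK ((n : ℝ) / (4 * (n + 1))) σ) :
    MemLp (fun θ : (Fin n → ℝ) × ℝ => σ (∑ i, θ.1 i + θ.2)) 2 (initMeasure n) := by
  rw [memLp_two_iff_integrable_sq]
  · rw [integrable_init_iff _ hn]
    have i1 : Integrable (fun s : ℝ => σ s ^ 2 * Real.exp (-((n : ℝ) / 2) * (s ^ 2 / (n + 1)))) := by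
      have := h.integrable_sq
      refine this.congr (ae_of_all _ fun s => ?_)
      simp only [mul_pow]
      rw [← Real.exp_nat_mul]
      congr 2; push_cast; field_simp; ring
    have i0 : Integrable (fun u : Fin n → ℝ =>
        Real.exp (-((n : ℝ) / 2) * (∑ i, u i ^ 2 + (∑ i, u i) ^ 2))) := by
      have hn0 : (0 : ℝ) < n := by exact_mod_cast hn
      have : Integrable (fun u : Fin n → ℝ => ∏ i, Real.exp (-((n : ℝ) / 2) * u i ^ 2)) :=
        Integrable.fintype_prod (μ := fun _ => volume)
          (f := fun _ x => Real.exp (-((n : ℝ) / 2) * x ^ 2))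
          (fun _ => integrable_exp_neg_mul_sq (by positivity))
      refine this.mono' (Continuous.aestronglyMeasurable (by fun_prop)) (ae_of_all _ fun u => ?_)
      rw [Real.norm_of_nonneg (Real.exp_pos _).le, ← Real.exp_sum, ← Finset.mul_sum]
      apply Real.exp_le_exp.2
      nlinarith [sq_nonneg (∑ i, u i)]
    have i2 := int_comp_lin (volume.prod volume) (volume.prod volume)
      (L2 n).toContinuousLinearEquiv.symm _ (i0.mul_prod i1)
    refine i2.congr (ae_of_all _ fun θ => ?_)
    obtain ⟨z, rfl⟩ := (L2 n).toContinuousLinearEquiv.surjective θ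
    simp only [ContinuousLinearEquiv.symm_apply_apply]
    simp only [LinearEquiv.coe_toContinuousLinearEquiv', L2_quad]
    have := L2_arg n z (fun _ => true)
    have hne : (n : ℝ) + 1 ≠ 0 := by positivity
    simp [bsign, div_self hne] at this
    rw [this, mul_left_comm, ← Real.exp_add]
    congr 2
    ring
  · refine (KK_meas h).comp_quasiMeasurePreserving (f := fun θ => TT n θ) ?_
    have hs : Function.Surjective (TT n) := fun y => ⟨(0, y), by simp [TT]⟩
    obtain ⟨c, hc, e⟩ := (TT n).exists_map_addHaar_eq_smul_addHaar
      ((volume : Measure (Fin n → ℝ)).prod (volume : Measure ℝ)) volume hs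
    refine ⟨(TT n).continuous_of_finiteDimensional.measurable, ?_⟩
    refine ((init_ac n hn).map (TT n).continuous_of_finiteDimensional.measurable).trans ?_
    rw [e]
    exact Measure.smul_absolutelyContinuous

lemma bsign_sq (b : Bool) : bsign b * bsign b = 1 := by cases b <;> simp [bsign]

lemma bsign_beq (a b : Bool) : bsign (a == b) = bsign a * bsign b := by
  cases a <;> cases b <;> simp [bsign]

lemma mp_flip (n : ℕ) (y : Fin n → Bool) :
    MeasurePreserving (fun θ : (Fin n → ℝ) × ℝ => ((fun i => θ.1 i * bsign (y i)), θ.2))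
      (initMeasure n) (initMeasure n) := by
  unfold initMeasure
  refine MeasurePreserving.prod (f := fun w : Fin n → ℝ => fun i => w i * bsign (y i)) (g := id)
    ?_ (MeasurePreserving.id _)
  refine measurePreserving_pi _ _ (f := fun i (w : ℝ) => w * bsign (y i)) (fun i => ?_)
  refine ⟨by fun_prop, ?_⟩
  rw [gaussianReal_map_mul_const]
  congr 1
  · simp
  · ext; simp [pow_two, bsign_sq]

lemma mp_perm (n : ℕ) (e : Equiv.Perm (Fin n)) :
    MeasurePreserving (fun θ : (Fin n → ℝ) × ℝ => ((fun i => θ.1 (e.symm i)), θ.2))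
      (initMeasure n) (initMeasure n) := by
  unfold initMeasure
  refine MeasurePreserving.prod (f := fun w : Fin n → ℝ => fun i => w (e.symm i)) (g := id)
    ?_ (MeasurePreserving.id _)
  have := measurePreserving_piCongrLeft (fun _ : Fin n => gaussianReal 0 (n : ℝ≥0)⁻¹) e
  convert this using 1
  funext w i
  obtain ⟨j, rfl⟩ := e.surjective i
  rw [MeasurableEquiv.coe_piCongrLeft, Equiv.piCongrLeft_apply_apply]
  simp

lemma memLp_all (n : ℕ) (hn : 0 < n) (σ : ℝ → ℝ) (h : KK ((n : ℝ) / (4 * (n + 1))) σ)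
    (x : Fin n → Bool) :
    MemLp (fun θ : (Fin n → ℝ) × ℝ => σ (∑ i, θ.1 i * bsign (x i) + θ.2)) 2 (initMeasure n) :=
  (memLp_one n hn σ h).comp_measurePreserving (mp_flip n x)

/-- the correlation -/
def GG (n : ℕ) (σ : ℝ → ℝ) (f : (Fin n → Bool) → ℝ) (θ : (Fin n → ℝ) × ℝ) : ℝ :=
  bExp n fun x => f x * σ (∑ i, θ.1 i * bsign (x i) + θ.2)

lemma GG_memLp (n : ℕ) (σ : ℝ → ℝ) (f : (Fin n → Bool) → ℝ)
    (h : ∀ x : Fin n → Bool, MemLp (fun θ : (Fin n → ℝ) × ℝ =>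
      σ (∑ i, θ.1 i * bsign (x i) + θ.2)) 2 (initMeasure n)) :
    MemLp (GG n σ f) 2 (initMeasure n) := by
  have := (memLp_finsetSum Finset.univ (fun x _ => (h x).const_mul (f x))).const_mul (2 ^ n)⁻¹
  convert this using 2 with θ
  simp only [GG, bExp]
  rw [div_eq_inv_mul]

lemma chi_mul_chi (n : ℕ) (x y : Fin n → Bool) :
    ∑ S : Finset (Fin n), chi S x * chi S y = if x = y then 2 ^ n else 0 := by
  have : ∀ S : Finset (Fin n), chi S x * chi S y = ∏ i ∈ S, (bsign (x i) * bsign (y i)) := by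
    intro S; simp [chi, Finset.prod_mul_distrib]
  simp_rw [this]
  rw [← Finset.powerset_univ, ← Finset.prod_one_add]
  split_ifs with hxy
  · subst hxy
    simp only [bsign_sq]
    norm_num
  · obtain ⟨i, hi⟩ := Function.ne_iff.1 hxy
    apply Finset.prod_eq_zero (Finset.mem_univ i)
    revert hi
    cases x i <;> cases y i <;> simp [bsign]

lemma fourier_inv (n : ℕ) (f : (Fin n → Bool) → ℝ) (x : Fin n → Bool) :
    f x = ∑ S, fourierCoef n f S * chi S x := by
  have : ∀ S, fourierCoef n f S * chi S x = ∑ y, f y / 2 ^ n * (chi S y * chi S x) := by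
    intro S
    rw [fourierCoef, bExp, Finset.sum_div, Finset.sum_mul]
    refine Finset.sum_congr rfl fun y _ => ?_
    ring
  simp_rw [this]
  rw [Finset.sum_comm]
  simp_rw [← Finset.mul_sum, chi_mul_chi]
  simp

lemma GG_expand (n : ℕ) (σ : ℝ → ℝ) (f : (Fin n → Bool) → ℝ) (θ : (Fin n → ℝ) × ℝ) :
    GG n σ f θ = ∑ S, fourierCoef n f S * GG n σ (chi S) θ := by
  simp only [GG, bExp]
  simp_rw [← mul_div_assoc, Finset.mul_sum]
  rw [← Finset.sum_div, Finset.sum_comm]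
  congr 1
  refine Finset.sum_congr rfl fun x _ => ?_
  conv_lhs => rw [fourier_inv n f x]
  rw [Finset.sum_mul]
  refine Finset.sum_congr rfl fun S _ => ?_
  ring

def flipEquiv (n : ℕ) (y : Fin n → Bool) : (Fin n → Bool) ≃ (Fin n → Bool) where
  toFun x := fun i => x i == y i
  invFun x := fun i => x i == y i
  left_inv x := by
    funext i
    change ((x i == y i) == y i) = x i
    cases x i <;> cases y i <;> rfl
  right_inv x := by
    funext i
    change ((x i == y i) == y i) = x i
    cases x i <;> cases y i <;> rfl

lemma GG_flip (n : ℕ) (σ : ℝ → ℝ) (S : Finset (Fin n)) (y : Fin n → Bool)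
    (θ : (Fin n → ℝ) × ℝ) :
    GG n σ (chi S) ((fun i => θ.1 i * bsign (y i)), θ.2) = chi S y * GG n σ (chi S) θ := by
  simp only [GG, bExp]
  rw [← mul_div_assoc, Finset.mul_sum, ← (flipEquiv n y).sum_comp]
  congr 1
  refine Finset.sum_congr rfl fun x _ => ?_
  simp only [flipEquiv, Equiv.coe_fn_mk, chi, bsign_beq, Finset.prod_mul_distrib]
  rw [← mul_assoc, mul_comm (∏ i ∈ S, bsign (y i))]
  congr 2
  congr 1
  refine Finset.sum_congr rfl fun i _ => ?_
  rw [mul_assoc, mul_left_comm (bsign (y i)), bsign_sq, mul_one]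

lemma GG_orth (n : ℕ) (σ : ℝ → ℝ) (S T : Finset (Fin n)) (hST : S ≠ T)
    (hmeas : AEStronglyMeasurable (fun θ => GG n σ (chi S) θ * GG n σ (chi T) θ) (initMeasure n)) :
    ∫ θ, GG n σ (chi S) θ * GG n σ (chi T) θ ∂(initMeasure n) = 0 := by
  obtain ⟨i, hi⟩ : ∃ i, ¬ (i ∈ S ↔ i ∈ T) := by
    by_contra hcon
    push Not at hcon
    exact hST (Finset.ext hcon)
  set y : Fin n → Bool := fun j => if j = i then false else true with hy
  have hchi : ∀ U : Finset (Fin n), chi U y = if i ∈ U then -1 else 1 := by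
    intro U
    have : ∀ j, bsign (y j) = if j = i then -1 else 1 := by
      intro j; by_cases hj : j = i <;> simp [hy, hj, bsign]
    simp only [chi, this, Finset.prod_ite_eq']
  have hmp := mp_flip n y
  have e := integral_map hmp.measurable.aemeasurable (hmp.map_eq.symm ▸ hmeas)
  rw [hmp.map_eq] at e
  simp only [GG_flip, hchi] at e
  have e2 : ∀ θ, (if i ∈ S then (-1:ℝ) else 1) * GG n σ (chi S) θ *
      ((if i ∈ T then (-1:ℝ) else 1) * GG n σ (chi T) θ) =
      - (GG n σ (chi S) θ * GG n σ (chi T) θ) := by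
    intro θ
    by_cases h1 : i ∈ S <;> by_cases h2 : i ∈ T <;> simp [h1, h2] at hi ⊢
  simp only [e2, integral_neg] at e
  linarith

lemma INAL_perm (n : ℕ) (σ : ℝ → ℝ) (S T : Finset (Fin n)) (hc : S.card = T.card)
    (hmeas : AEStronglyMeasurable (GG n σ (chi T)) (initMeasure n)) :
    INAL n (chi S) σ = INAL n (chi T) σ := by
  set e : Equiv.Perm (Fin n) := (Finset.equivOfCardEq hc).extendSubtype with he
  have hmap : S.map e.toEmbedding = T := by
    apply Finset.eq_of_subset_of_card_le
    · intro j hj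
      obtain ⟨i, hi, rfl⟩ := Finset.mem_map.1 hj
      exact (Finset.equivOfCardEq hc).extendSubtype_mem i hi
    · simp [hc]
  have hmp := mp_perm n e
  have e1 := integral_map (f := fun θ => GG n σ (chi T) θ ^ 2) hmp.measurable.aemeasurable
    (hmp.map_eq.symm ▸ hmeas.pow 2)
  rw [hmp.map_eq] at e1
  change ∫ θ, GG n σ (chi S) θ ^ 2 ∂(initMeasure n) = ∫ θ, GG n σ (chi T) θ ^ 2 ∂(initMeasure n)
  rw [e1]
  congr 1
  funext θ
  congr 1
  simp only [GG, bExp]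
  congr 1
  rw [← (e.arrowCongr (Equiv.refl Bool)).symm.sum_comp]
  refine Finset.sum_congr rfl fun x _ => ?_
  congr 1
  · rw [← hmap]
    simp [chi, Finset.prod_map, Equiv.arrowCongr]
  · congr 2
    rw [← Equiv.sum_comp e (fun i => θ.1 (e.symm i) * bsign (x i))]
    simp [Equiv.arrowCongr]

lemma INAL_expand (n : ℕ) (σ : ℝ → ℝ) (f : (Fin n → Bool) → ℝ)
    (h : ∀ S : Finset (Fin n), MemLp (GG n σ (chi S)) 2 (initMeasure n)) :
    INAL n f σ = ∑ S, fourierCoef n f S ^ 2 * INAL n (chi S) σ := by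
  have hint : ∀ S T : Finset (Fin n),
      Integrable (fun θ => GG n σ (chi S) θ * GG n σ (chi T) θ) (initMeasure n) :=
    fun S T => (h S).integrable_mul (h T)
  change ∫ θ, GG n σ f θ ^ 2 ∂(initMeasure n) =
    ∑ S, fourierCoef n f S ^ 2 * ∫ θ, GG n σ (chi S) θ ^ 2 ∂(initMeasure n)
  have e : ∀ θ, GG n σ f θ ^ 2 = ∑ S, ∑ T, (fourierCoef n f S * fourierCoef n f T) *
      (GG n σ (chi S) θ * GG n σ (chi T) θ) := by
    intro θ
    rw [GG_expand, pow_two, Finset.sum_mul_sum]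
    refine Finset.sum_congr rfl fun S _ => Finset.sum_congr rfl fun T _ => ?_
    ring
  simp_rw [e]
  rw [integral_finsetSum _ (fun S _ => integrable_finsetSum _ fun T _ => (hint S T).const_mul _)]
  refine Finset.sum_congr rfl fun S _ => ?_
  rw [integral_finsetSum _ (fun T _ => (hint S T).const_mul _)]
  rw [Finset.sum_eq_single S]
  · rw [integral_const_mul, pow_two]
    simp_rw [pow_two]
  · intro T _ hT
    rw [integral_const_mul, GG_orth n σ S T hT.symm (hint S T).1, mul_zero]
  · simp

lemma INAL_nonneg (n : ℕ) (σ : ℝ → ℝ) (f : (Fin n → Bool) → ℝ) : 0 ≤ INAL n f σ :=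
  integral_nonneg fun _ => sq_nonneg _

lemma memLp_of_INAL_ne (n : ℕ) (hn : 0 < n) (σ : ℝ → ℝ) (h : INAL n (monomial n 0) σ ≠ 0)
    (f : (Fin n → Bool) → ℝ) : MemLp (GG n σ f) 2 (initMeasure n) := by
  refine GG_memLp n σ f (memLp_all n hn σ (stage2 n hn σ ?_))
  have hi : Integrable (fun θ => GG n σ (monomial n 0) θ ^ 2) (initMeasure n) := by
    by_contra hcon
    exact h (integral_undef hcon)
  refine (hi.const_mul ((2 ^ n) ^ 2)).congr (ae_of_all _ fun θ => ?_)
  simp [GG, bExp, monomial]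
  field_simp

lemma main_bound (n k k₀ : ℕ) (hn : 0 < n) (hk : k ≤ n) (σ : ℝ → ℝ) (C : ℝ)
    (h : ∀ k' ≤ k, ((n : ℝ) ^ k₀)⁻¹ ≤ C * INAL n (monomial n k') σ) (f : (Fin n → Bool) → ℝ) :
    weightLE n k f ≤ C * (INAL n f σ * (n : ℝ) ^ k₀) := by
  have hn0 : (0 : ℝ) < n := by exact_mod_cast hn
  have hne : INAL n (monomial n 0) σ ≠ 0 := by
    intro h0
    have := h 0 (Nat.zero_le _)
    rw [h0, mul_zero] at this
    have : (0 : ℝ) < ((n : ℝ) ^ k₀)⁻¹ := by positivity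
    linarith
  have hC : 0 ≤ C := by
    by_contra hcon
    have h1 := h 0 (Nat.zero_le _)
    have h2 := INAL_nonneg n σ (monomial n 0)
    have : (0 : ℝ) < ((n : ℝ) ^ k₀)⁻¹ := by positivity
    nlinarith
  have hL := memLp_of_INAL_ne n hn σ hne
  rw [INAL_expand n σ f (fun S => hL _), Finset.sum_mul, Finset.mul_sum, weightLE]
  refine le_trans (Finset.sum_le_sum (g := fun S => C * (fourierCoef n f S ^ 2 *
    INAL n (chi S) σ * (n : ℝ) ^ k₀)) fun S hS => ?_)
    (Finset.sum_le_univ_sum_of_nonneg fun S => ?_)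
  · have hS' : S.card ≤ k := (Finset.mem_filter.1 hS).2
    have hb := h S.card hS'
    have e : INAL n (monomial n S.card) σ = INAL n (chi S) σ := by
      refine INAL_perm n σ _ S ?_ (hL _).1
      rw [Fin.card_filter_val_lt]
      exact min_eq_right (hS'.trans hk)
    rw [e, inv_le_iff_one_le_mul₀ (by positivity)] at hb
    nlinarith [sq_nonneg (fourierCoef n f S), mul_le_mul_of_nonneg_left hb (sq_nonneg (fourierCoef n f S))]
  · have := INAL_nonneg n σ (chi S)
    positivity

/-- If `INAL(M_{k'}, σ) = Ω(n^{-k₀})` for all `k' = 0, …, k`, then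
`W^{≤k}(f_n) ≤ INAL(f_n, σ) · O(n^{k₀})`. -/
theorem low_degree_weight_le_inal
    (σ : ℝ → ℝ) (k k₀ : ℕ)
    (h : ∀ k' : ℕ, k' ≤ k →
      (fun n : ℕ => ((n : ℝ) ^ k₀)⁻¹) =O[atTop] fun n : ℕ => INAL n (monomial n k') σ)
    (f : ∀ n : ℕ, (Fin n → Bool) → ℝ) :
    (fun n : ℕ => weightLE n k (f n)) =O[atTop]
      fun n : ℕ => INAL n (f n) σ * (n : ℝ) ^ k₀ := by
  choose! C hCpos hC using fun k' (hk' : k' ≤ k) => (h k' hk').exists_pos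
  have hev : ∀ᶠ n : ℕ in atTop, ∀ k' ∈ Finset.range (k + 1),
      ((n : ℝ) ^ k₀)⁻¹ ≤ C k' * INAL n (monomial n k') σ := by
    rw [Filter.eventually_all_finset]
    intro k' hk'
    filter_upwards [(hC k' (Nat.lt_succ_iff.1 (Finset.mem_range.1 hk'))).bound] with n hn
    rw [Real.norm_of_nonneg (by positivity), Real.norm_of_nonneg (INAL_nonneg n σ _)] at hn
    exact hn
  refine IsBigO.of_bound (∑ k' ∈ Finset.range (k + 1), C k') ?_
  filter_upwards [hev, eventually_ge_atTop (k + 1)] with n hn hnk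
  have hw : 0 ≤ weightLE n k (f n) := Finset.sum_nonneg fun S _ => sq_nonneg _
  rw [Real.norm_of_nonneg hw, Real.norm_of_nonneg
    (mul_nonneg (INAL_nonneg n σ _) (by positivity))]
  refine main_bound n k k₀ (by omega) (by omega) σ _ (fun k' hk' => ?_) (f n)
  have hm : k' ∈ Finset.range (k + 1) := Finset.mem_range.2 (by omega)
  refine (hn k' hm).trans ?_
  refine mul_le_mul_of_nonneg_right ?_ (INAL_nonneg n σ _)
  exact Finset.single_le_sum (f := C) (fun i hi =>
    (hCpos i (Nat.lt_succ_iff.1 (Finset.mem_range.1 hi))).le) hm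
end
end

section
/- Let f : {±1}^n → {±1}, let N > n, let f̄ be the N-extension of f, and let π be a uniformly random permutation of [N]. Then for every k ∈ ℕ with 1 ≤ k ≤ n, the cross-predictability satisfies CP(orb(f̄), U^N) ≤ W^{<k}(f) + C(n,k)/C(N,k), where C(n,k) denotes the binomial coefficient; in particular, with N = n^{1+ε}, CP(orb(f̄), U^N) ≤ W^{<k}(f) + e^k · n^{-εk}. -/
open MeasureTheory ProbabilityTheory Filter Finset Asymptotics
open scoped NNReal ENNReal

noncomputable section

lemma aux_chi_mul_chi_sum_sets {n : ℕ} (x y : Fin n → Bool) :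
    ∑ S : Finset (Fin n), chi S x * chi S y = if x = y then (2:ℝ) ^ n else 0 := by
  have h : ∑ S : Finset (Fin n), chi S x * chi S y
      = ∏ i : Fin n, (1 + bsign (x i) * bsign (y i)) := by
    rw [Finset.prod_one_add, Finset.powerset_univ]
    refine Finset.sum_congr rfl fun S _ => ?_
    simp only [chi, Finset.prod_mul_distrib]
  rw [h]
  split_ifs with hxy
  · subst hxy
    have : ∀ i, 1 + bsign (x i) * bsign (x i) = 2 := by
      intro i; cases x i <;> norm_num [bsign]
    simp [this]
  · obtain ⟨i, hi⟩ := Function.ne_iff.mp hxy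
    refine Finset.prod_eq_zero (Finset.mem_univ i) ?_
    revert hi
    cases x i <;> cases y i <;> norm_num [bsign]

lemma aux_orth {n : ℕ} (S T : Finset (Fin n)) :
    bExp n (fun x => chi S x * chi T x) = if S = T then 1 else 0 := by
  have h : ∑ x : Fin n → Bool, chi S x * chi T x
      = ∏ i : Fin n, ∑ b : Bool, ((if i ∈ S then bsign b else 1) * (if i ∈ T then bsign b else 1)) := by
    rw [Finset.prod_univ_sum, Fintype.piFinset_univ]
    refine Finset.sum_congr rfl fun x _ => ?_
    rw [Finset.prod_mul_distrib, Finset.prod_ite_mem, Finset.prod_ite_mem, Finset.univ_inter,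
      Finset.univ_inter]
    rfl
  rw [bExp, h]
  split_ifs with hST
  · subst hST
    have : ∀ i, ∑ b : Bool, ((if i ∈ S then bsign b else 1) * (if i ∈ S then bsign b else 1)) = 2 := by
      intro i; by_cases hi : i ∈ S <;> norm_num [bsign, hi]
    simp only [this]
    simp
  · have : ∃ i, ¬ (i ∈ S ↔ i ∈ T) := by
      by_contra hc
      push Not at hc
      exact hST (Finset.ext hc)
    obtain ⟨i, hi⟩ := this
    rw [Finset.prod_eq_zero (Finset.mem_univ i), zero_div]
    by_cases h1 : i ∈ S <;> by_cases h2 : i ∈ T <;> simp_all [bsign]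

lemma aux_inversion {n : ℕ} (f : (Fin n → Bool) → ℝ) (x : Fin n → Bool) :
    f x = ∑ S : Finset (Fin n), fourierCoef n f S * chi S x := by
  have : ∑ S : Finset (Fin n), fourierCoef n f S * chi S x
      = (∑ y, f y * ∑ S : Finset (Fin n), chi S y * chi S x) / 2 ^ n := by
    simp only [fourierCoef, bExp, Finset.mul_sum]
    rw [Finset.sum_comm, Finset.sum_div]
    refine Finset.sum_congr rfl fun S _ => ?_
    rw [div_mul_eq_mul_div, Finset.sum_mul]
    simp only [mul_assoc]
  rw [this]
  simp [aux_chi_mul_chi_sum_sets]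

lemma aux_parseval {n : ℕ} (f : (Fin n → Bool) → ℝ) (hf : IsBooleanFn f) :
    ∑ S : Finset (Fin n), fourierCoef n f S ^ 2 = 1 := by
  have h : ∑ S : Finset (Fin n), fourierCoef n f S ^ 2
      = (∑ y, f y * ∑ S : Finset (Fin n), fourierCoef n f S * chi S y) / 2 ^ n := by
    simp only [Finset.mul_sum]
    rw [Finset.sum_comm, Finset.sum_div]
    refine Finset.sum_congr rfl fun S _ => ?_
    rw [sq]
    nth_rewrite 2 [fourierCoef]
    rw [bExp, ← mul_div_assoc, Finset.mul_sum]
    congr 1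
    refine Finset.sum_congr rfl fun y _ => ?_
    ring
  rw [h]
  simp only [← aux_inversion]
  have : ∀ y, f y * f y = 1 := by
    intro y; rcases hf y with h | h <;> rw [h] <;> norm_num
  simp [this]

lemma aux_count_le {N : ℕ} (A B B' : Finset (Fin N)) (h : B.card = B'.card) :
    (univ.filter (fun π : Equiv.Perm (Fin N) => A.map π.toEmbedding = B)).card ≤
    (univ.filter (fun π : Equiv.Perm (Fin N) => A.map π.toEmbedding = B')).card := by
  let e : {x // x ∈ B} ≃ {x // x ∈ B'} := Finset.equivOfCardEq h
  let τ : Equiv.Perm (Fin N) := e.extendSubtype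
  have hτ : B.map τ.toEmbedding = B' := by
    apply Finset.eq_of_subset_of_card_le
    · intro y hy
      obtain ⟨x, hx, rfl⟩ := Finset.mem_map.mp hy
      exact e.extendSubtype_mem x hx
    · rw [Finset.card_map, h]
  refine Finset.card_le_card_of_injOn (fun π => π.trans τ) ?_ ?_
  · intro π hπ
    simp only [Finset.coe_filter, Finset.mem_univ, true_and, Set.mem_ofPred_eq] at hπ ⊢
    rw [← hτ, ← hπ, Finset.map_map]
    rfl
  · intro π _ π' _ hh
    ext i
    have := congrArg (fun g : Equiv.Perm (Fin N) => g i) hh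
    simp at this
    rw [this]

lemma aux_count {N : ℕ} (A B : Finset (Fin N)) (h : A.card = B.card) :
    (univ.filter (fun π : Equiv.Perm (Fin N) => A.map π.toEmbedding = B)).card *
      N.choose A.card = Fintype.card (Equiv.Perm (Fin N)) := by
  have h1 : Fintype.card (Equiv.Perm (Fin N)) = ∑ C ∈ Finset.powersetCard A.card univ,
      (univ.filter (fun π : Equiv.Perm (Fin N) => A.map π.toEmbedding = C)).card := by
    rw [← Finset.card_univ]
    apply Finset.card_eq_sum_card_fiberwise
    intro π _
    simp [Finset.mem_powersetCard]
  rw [h1, Finset.sum_congr rfl (g := fun _ =>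
    (univ.filter (fun π : Equiv.Perm (Fin N) => A.map π.toEmbedding = B)).card)]
  · simp [mul_comm]
  · intro C hC
    have hC' := (Finset.mem_powersetCard.mp hC).2
    exact le_antisymm (aux_count_le _ _ _ (by omega)) (aux_count_le _ _ _ (by omega))

lemma aux_ratio_step (n N m : ℕ) (hnN : n < N) (hm : m < n) :
    (n.choose (m+1) : ℝ) / N.choose (m+1) ≤ (n.choose m : ℝ) / N.choose m * (n / N) := by
  have e1 : (n.choose (m+1) : ℝ) * (m+1) = n.choose m * (n - m) := by
    have := Nat.choose_succ_right_eq n m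
    rw [← Nat.cast_sub hm.le]; exact_mod_cast this
  have e2 : (N.choose (m+1) : ℝ) * (m+1) = N.choose m * (N - m) := by
    have := Nat.choose_succ_right_eq N m
    rw [← Nat.cast_sub (hm.trans hnN).le]; exact_mod_cast this
  have p1 : (0:ℝ) < N.choose m := by exact_mod_cast Nat.choose_pos (hm.trans hnN).le
  have a1 : (m:ℝ) < n := by exact_mod_cast hm
  have a2 : (n:ℝ) < N := by exact_mod_cast hnN
  have a0 : (0:ℝ) ≤ m := Nat.cast_nonneg m
  have p2 : (0:ℝ) < m + 1 := by positivity
  rw [← mul_div_mul_right _ _ p2.ne', e1, e2, mul_div_mul_comm]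
  refine mul_le_mul_of_nonneg_left ?_ (by positivity)
  rw [div_le_div_iff₀ (by linarith) (by linarith)]
  nlinarith

lemma aux_ratio_anti (n N k m : ℕ) (hnN : n < N) (hkm : k ≤ m) (hmn : m ≤ n) :
    (n.choose m : ℝ) / N.choose m ≤ (n.choose k : ℝ) / N.choose k := by
  induction m, hkm using Nat.le_induction with
  | base => exact le_rfl
  | succ m hkm ih =>
    refine (aux_ratio_step n N m hnN (by omega)).trans ?_
    refine le_trans ?_ (ih (by omega))
    apply mul_le_of_le_one_right (by positivity)
    apply div_le_one_of_le₀ _ (by positivity)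
    exact_mod_cast hnN.le

lemma aux_ratio_pow (n N k : ℕ) (hnN : n < N) (hk : k ≤ n) :
    (n.choose k : ℝ) / N.choose k ≤ ((n:ℝ) / N) ^ k := by
  induction k with
  | zero => simp
  | succ k ih =>
    refine (aux_ratio_step n N k hnN (by omega)).trans ?_
    rw [pow_succ]
    exact mul_le_mul_of_nonneg_right (ih (by omega)) (by positivity)

/-- image of `S` in `Fin N` under the inclusion and the permutation. -/
def auxImg {n N : ℕ} (h : n ≤ N) (π : Equiv.Perm (Fin N)) (S : Finset (Fin n)) :
    Finset (Fin N) := (S.map (Fin.castLEEmb h)).map π.toEmbedding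

lemma auxImg_inj {n N : ℕ} (h : n ≤ N) (π : Equiv.Perm (Fin N)) (S T : Finset (Fin n))
    (hh : auxImg h π S = auxImg h π T) : S = T :=
  Finset.map_injective _ (Finset.map_injective _ hh)

lemma aux_inner {n N : ℕ} (h : n ≤ N) (f : (Fin n → Bool) → ℝ) (π π' : Equiv.Perm (Fin N)) :
    bExp N (fun x => extendFn n N f (fun i => x (π i)) * extendFn n N f (fun i => x (π' i)))
     = ∑ p ∈ univ.filter (fun p : Finset (Fin n) × Finset (Fin n) =>
        auxImg h π p.1 = auxImg h π' p.2), fourierCoef n f p.1 * fourierCoef n f p.2 := by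
  have e : ∀ (π : Equiv.Perm (Fin N)) (x : Fin N → Bool), extendFn n N f (fun i => x (π i))
      = ∑ S : Finset (Fin n), fourierCoef n f S * chi (auxImg h π S) x := by
    intro π x
    rw [extendFn, aux_inversion f]
    refine Finset.sum_congr rfl fun S _ => ?_
    congr 1
    simp only [chi, auxImg, Finset.prod_map]
    refine Finset.prod_congr rfl fun i _ => ?_
    rw [dif_pos (lt_of_lt_of_le i.2 h)]
    rfl
  simp only [e]
  rw [Finset.sum_filter, Fintype.sum_prod_type]
  have o := fun S T => aux_orth (auxImg h π S) (auxImg h π' T)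
  have : ∀ S T : Finset (Fin n), (if auxImg h π S = auxImg h π' T then
      fourierCoef n f S * fourierCoef n f T else 0) = fourierCoef n f S * fourierCoef n f T *
      bExp N (fun x => chi (auxImg h π S) x * chi (auxImg h π' T) x) := by
    intro S T; rw [o]; simp
  simp only [this, bExp, Finset.sum_mul_sum]
  rw [Finset.sum_div, Finset.sum_congr rfl fun x _ => Finset.sum_div _ _ _]
  rw [Finset.sum_comm]
  refine Finset.sum_congr rfl fun S _ => ?_
  simp only [Finset.sum_div]
  rw [Finset.sum_comm]
  refine Finset.sum_congr rfl fun T _ => ?_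
  rw [Finset.mul_sum]
  refine Finset.sum_congr rfl fun x _ => ?_
  ring

lemma aux_inner_sq {n N : ℕ} (h : n ≤ N) (f : (Fin n → Bool) → ℝ) (hf : IsBooleanFn f)
    (π π' : Equiv.Perm (Fin N)) :
    (bExp N (fun x => extendFn n N f (fun i => x (π i)) *
      extendFn n N f (fun i => x (π' i)))) ^ 2 ≤
    ∑ S : Finset (Fin n), ∑ T : Finset (Fin n),
      if auxImg h π S = auxImg h π' T then fourierCoef n f S ^ 2 else 0 := by
  rw [aux_inner h]
  refine (Finset.sum_mul_sq_le_sq_mul_sq _ _ _).trans ?_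
  rw [← Fintype.sum_prod_type', ← Finset.sum_filter]
  apply mul_le_of_le_one_right (Finset.sum_nonneg fun _ _ => sq_nonneg _)
  rw [← aux_parseval f hf, ← Finset.sum_image (s := univ.filter _) (g := Prod.snd)
    (f := fun T => fourierCoef n f T ^ 2)]
  · exact Finset.sum_le_sum_of_subset_of_nonneg (Finset.subset_univ _) fun _ _ _ => sq_nonneg _
  · rintro ⟨S, T⟩ hp ⟨S', T'⟩ hq hh
    simp only [Finset.coe_filter, Finset.mem_univ, true_and, Set.mem_ofPred_eq] at hp hq hh
    subst hh
    rw [auxImg_inj h π S S' (hp.trans hq.symm)]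

lemma aux_pairs {n N : ℕ} (h : n ≤ N) (S T : Finset (Fin n)) (c : ℝ) :
    ∑ π : Equiv.Perm (Fin N), ∑ π' : Equiv.Perm (Fin N),
      (if auxImg h π S = auxImg h π' T then c else 0) =
    if T.card = S.card then
      c * ((Fintype.card (Equiv.Perm (Fin N)) : ℝ) ^ 2 / N.choose S.card) else 0 := by
  split_ifs with hc
  · rw [Finset.sum_comm]
    have p : (0:ℝ) < N.choose S.card := by
      exact_mod_cast Nat.choose_pos ((Finset.card_le_univ S).trans (by simpa using h))
    have : ∀ π' : Equiv.Perm (Fin N), ∑ π : Equiv.Perm (Fin N),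
      (if auxImg h π S = auxImg h π' T then c else 0) =
        c * ((Fintype.card (Equiv.Perm (Fin N)) : ℝ) / N.choose S.card) := by
      intro π'
      have := aux_count (S.map (Fin.castLEEmb h)) (auxImg h π' T) (by simp [auxImg, hc])
      rw [← Finset.sum_filter, Finset.sum_const, nsmul_eq_mul, ← this, Finset.card_map]
      push_cast
      rw [mul_div_cancel_right₀ _ p.ne', mul_comm]
      rfl
    simp only [this]
    rw [Finset.sum_const, nsmul_eq_mul, Finset.card_univ]
    ring
  · refine Finset.sum_eq_zero fun π _ => Finset.sum_eq_zero fun π' _ => if_neg fun hh => hc ?_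
    have := congrArg Finset.card hh
    simpa [auxImg] using this.symm

lemma aux_main (n N : ℕ) (hnN : n < N) (f : (Fin n → Bool) → ℝ) (hf : IsBooleanFn f)
    (k : ℕ) :
    orbitCP N (extendFn n N f) ≤
        weightLT n k f + (n.choose k : ℝ) / (N.choose k : ℝ) := by
  have hP : (0:ℝ) < (Fintype.card (Equiv.Perm (Fin N)) : ℝ) ^ 2 := by
    have : 0 < Fintype.card (Equiv.Perm (Fin N)) := Fintype.card_pos
    positivity
  have h1 : orbitCP N (extendFn n N f) ≤ ∑ S : Finset (Fin n),
      fourierCoef n f S ^ 2 * ((n.choose S.card : ℝ) / N.choose S.card) := by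
    rw [orbitCP, div_le_iff₀ hP]
    refine (Finset.sum_le_sum fun π _ => Finset.sum_le_sum fun π' _ =>
      aux_inner_sq hnN.le f hf π π').trans (le_of_eq ?_)
    have : ∑ π : Equiv.Perm (Fin N), ∑ π' : Equiv.Perm (Fin N),
        ∑ S : Finset (Fin n), ∑ T : Finset (Fin n),
        (if auxImg hnN.le π S = auxImg hnN.le π' T then fourierCoef n f S ^ 2 else 0) =
        ∑ S : Finset (Fin n), ∑ T : Finset (Fin n),
        ∑ π : Equiv.Perm (Fin N), ∑ π' : Equiv.Perm (Fin N),
        (if auxImg hnN.le π S = auxImg hnN.le π' T then fourierCoef n f S ^ 2 else 0) := by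
      rw [Finset.sum_congr rfl fun π _ => Finset.sum_comm, Finset.sum_comm]
      refine Finset.sum_congr rfl fun S _ => ?_
      rw [Finset.sum_congr rfl fun π _ => Finset.sum_comm, Finset.sum_comm]
    rw [this, Finset.sum_mul]
    refine Finset.sum_congr rfl fun S _ => ?_
    simp only [aux_pairs]
    rw [← Finset.sum_filter, Finset.sum_const, nsmul_eq_mul]
    have : (univ.filter (fun T : Finset (Fin n) => T.card = S.card)).card = n.choose S.card := by
      rw [Finset.univ_filter_card_eq]; simp
    rw [this]
    ring
  refine h1.trans ?_
  have h2 : weightLT n k f + (n.choose k : ℝ) / (N.choose k : ℝ) = ∑ S : Finset (Fin n),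
      ((if S.card < k then fourierCoef n f S ^ 2 else 0) +
        fourierCoef n f S ^ 2 * ((n.choose k : ℝ) / (N.choose k : ℝ))) := by
    rw [Finset.sum_add_distrib, ← Finset.sum_mul, aux_parseval f hf, ← Finset.sum_filter, one_mul]
    rfl
  rw [h2]
  refine Finset.sum_le_sum fun S _ => ?_
  have hS : S.card ≤ n := by simpa using Finset.card_le_univ S
  split_ifs with hc
  · have h0 := aux_ratio_anti n N 0 S.card hnN (Nat.zero_le _) hS
    simp only [Nat.choose_zero_right, Nat.cast_one, div_one] at h0
    have : 0 ≤ fourierCoef n f S ^ 2 * ((n.choose k : ℝ) / (N.choose k : ℝ)) := by positivity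
    have := mul_le_of_le_one_right (sq_nonneg (fourierCoef n f S)) h0
    linarith
  · rw [zero_add]
    exact mul_le_mul_of_nonneg_left (aux_ratio_anti n N k S.card hnN (by omega) hS) (sq_nonneg _)

/-- For `f : {±1}^n → {±1}`, `N > n` and `1 ≤ k ≤ n`, the
cross-predictability of the orbit of the `N`-extension `f̄` satisfies
`CP(orb(f̄), U^N) ≤ W^{<k}(f) + C(n,k)/C(N,k)`; in particular, when `N ≥ n^{1+ε}`,
`CP(orb(f̄), U^N) ≤ W^{<k}(f) + e^k n^{-εk}`. -/
theorem orbitCP_le_low_weight_add_choose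
    (n N : ℕ) (hnN : n < N) (f : (Fin n → Bool) → ℝ) (hf : IsBooleanFn f)
    (k : ℕ) (hk1 : 1 ≤ k) (hkn : k ≤ n) (ε : ℝ) (hε : 0 < ε) :
    orbitCP N (extendFn n N f) ≤
        weightLT n k f + (n.choose k : ℝ) / (N.choose k : ℝ) ∧
      ((n : ℝ) ^ (1 + ε) ≤ (N : ℝ) →
        orbitCP N (extendFn n N f) ≤
          weightLT n k f + Real.exp 1 ^ k * (n : ℝ) ^ (-(ε * k))) := by
  have H := aux_main n N hnN f hf k
  refine ⟨H, fun hN => H.trans ?_⟩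
  gcongr
  have hn : (0:ℝ) < n := by exact_mod_cast (by omega : 0 < n)
  have hN0 : (0:ℝ) < N := by exact_mod_cast (by omega : 0 < N)
  have h1 : (n:ℝ) / N ≤ (n:ℝ) ^ (-ε) := by
    rw [div_le_iff₀ hN0]
    calc (n:ℝ) = (n:ℝ) ^ (-ε) * (n:ℝ) ^ (1 + ε) := by
          rw [← Real.rpow_add hn]; simp
      _ ≤ _ := by gcongr
  calc (n.choose k : ℝ) / (N.choose k : ℝ) ≤ ((n:ℝ) / N) ^ k := aux_ratio_pow n N k hnN hkn
    _ ≤ ((n:ℝ) ^ (-ε)) ^ k := by gcongr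
    _ = (n:ℝ) ^ (-(ε * k)) := by
        rw [← Real.rpow_natCast, ← Real.rpow_mul hn.le, neg_mul]
    _ ≤ _ := by
        apply le_mul_of_one_le_left (by positivity)
        exact one_le_pow₀ (Real.one_le_exp (by norm_num))
end
end
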